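/- arXiv:1001.4012 — 2 statements merged into one kernel-verified Lean document; each statement's English description precedes it below -/
import Mathlib

section
/- Let X be a complete separable metric space, μ and ν Borel probability measures on X, and c : X × X → [0,∞] lower semicontinuous. If γ ∈ Π(μ,ν) is an optimal transport plan for cost c and ∫ c dγ < ∞, then γ is concentrated on a Borel c-cyclically monotone set: there is a Borel set Γ ⊆ X × X with γ(Γ) = 1 which is c-cyclically monotone. -/
open MeasureTheory

theorem riesz_aux {K : Type*} [TopologicalSpace K] [T2Space K] [CompactSpace K]
    [MeasurableSpace K] [BorelSpace K] (L : C(K, ℝ) →ₗ[ℝ] ℝ)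
    (hpos : ∀ f : C(K, ℝ), (∀ x, 0 ≤ f x) → 0 ≤ L f) (h1 : L 1 = 1) :
    ∃ m : Measure K, IsProbabilityMeasure m ∧ ∀ f : C(K, ℝ), ∫ x, f x ∂m = L f := by
  let L0 : CompactlySupportedContinuousMap K ℝ →ₗ[ℝ] ℝ :=
    { toFun := fun f => L f.toContinuousMap
      map_add' := fun f g => by
        rw [← map_add]; rfl
      map_smul' := fun r f => by
        rw [RingHom.id_apply, ← map_smul]; rfl }
  let Λ : CompactlySupportedContinuousMap K ℝ →ₚ[ℝ] ℝ := PositiveLinearMap.mk₀ L0 (by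
    intro f hf
    exact hpos _ (fun x => hf x))
  have key : ∀ f : C(K, ℝ), ∫ x, f x ∂(RealRMK.rieszMeasure Λ) = L f := by
    intro f
    exact RealRMK.integral_rieszMeasure Λ (CompactlySupportedContinuousMap.continuousMapEquiv f)
  have hfin : IsFiniteMeasure (RealRMK.rieszMeasure Λ) := inferInstance
  refine ⟨RealRMK.rieszMeasure Λ, ⟨?_⟩, key⟩
  have := key 1
  rw [h1] at this
  simp [Measure.real] at this
  rwa [ENNReal.toReal_eq_one_iff] at this

theorem approx_aux {Y Z : Type*} [TopologicalSpace Y] [Nonempty Y] [MetricSpace Z] (e : Y → Z)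
    (he : Topology.IsEmbedding e) (c : Y → ENNReal) (hc : LowerSemicontinuous c) :
    ∃ f : ℕ → C(Z, ℝ), (∀ n z, 0 ≤ f n z) ∧ (∀ n y, ENNReal.ofReal (f n (e y)) ≤ c y) ∧
      ∀ y, c y ≤ Filter.liminf (fun n => ENNReal.ofReal (f n (e y))) Filter.atTop := by
  let g : ℕ → Z → Y → ℝ := fun n z w => (min (c w) n).toReal + n * dist z (e w)
  have g0 : ∀ n z w, 0 ≤ g n z w := fun n z w => by positivity
  have gb : ∀ n z, BddBelow (Set.range (g n z)) := fun n z =>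
    ⟨0, by rintro _ ⟨w, rfl⟩; exact g0 n z w⟩
  have hle : ∀ n z z', (⨅ w, g n z w) ≤ (⨅ w, g n z' w) + n * dist z z' := by
    intro n z z'
    rw [← sub_le_iff_le_add]
    refine le_ciInf fun w => ?_
    rw [sub_le_iff_le_add]
    refine (ciInf_le (gb n z) w).trans ?_
    have := dist_triangle z z' (e w)
    have hn : (0:ℝ) ≤ n := by positivity
    simp only [g]
    nlinarith
  have hcont : ∀ n, Continuous (fun z => ⨅ w, g n z w) := by
    intro n
    refine (LipschitzWith.of_le_add_mul (n : NNReal) ?_).continuous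
    intro z z'
    simpa using hle n z z'
  refine ⟨fun n => ⟨_, hcont n⟩, fun n z => le_ciInf (g0 n z), ?_, ?_⟩
  · intro n y
    refine (ENNReal.ofReal_le_ofReal (ciInf_le (gb n (e y)) y)).trans ?_
    simp only [g, dist_self, mul_zero, add_zero]
    exact ENNReal.ofReal_toReal_le.trans (min_le_left _ _)
  · intro y
    refine le_of_forall_lt fun t ht => ?_
    obtain ⟨s, hts, hsc⟩ := exists_between ht
    refine hts.trans_le ?_
    have hs : s ≠ ⊤ := ne_top_of_lt hsc
    lift s to NNReal using hs
    refine Filter.le_liminf_of_le (by isBoundedDefault) ?_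
    have hn := hc y _ hsc
    rw [he.isInducing.nhds_eq_comap, Filter.eventually_comap, Metric.eventually_nhds_iff] at hn
    obtain ⟨r, hr, hr'⟩ := hn
    filter_upwards [Filter.eventually_ge_atTop (Nat.ceil s), Filter.eventually_ge_atTop (Nat.ceil (s / r))] with n h1 h2
    have h1' : (s:ℝ) ≤ n := by exact_mod_cast Nat.ceil_le.1 h1
    have h2' : (s:ℝ) / r ≤ n := Nat.ceil_le.1 h2
    change (s : ENNReal) ≤ ENNReal.ofReal (⨅ w, g n (e y) w)
    rw [ENNReal.le_ofReal_iff_toReal_le ENNReal.coe_ne_top (le_ciInf (g0 n _))]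
    refine le_ciInf fun w => ?_
    simp only [ENNReal.coe_toReal, g]
    by_cases hw : dist (e w) (e y) < r
    · have := hr' hw w rfl
      have h3 : (s : ENNReal) ≤ min (c w) n := le_min this.le (by exact_mod_cast h1')
      have h4 := ENNReal.toReal_mono (by simp) h3
      simp only [ENNReal.coe_toReal] at h4
      have : 0 ≤ n * dist (e y) (e w) := by positivity
      linarith
    · rw [dist_comm] at hw
      have h5 : s ≤ n * r := (div_le_iff₀ hr).1 h2'
      have : (n:ℝ) * r ≤ n * dist (e y) (e w) := by gcongr; exact not_lt.1 hw
      have : 0 ≤ (min (c w) n).toReal := by positivity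
      linarith

theorem final_aux {X : Type*} [MeasurableSpace X] 
    (c : X × X → ENNReal) (hc : Measurable c)
    (γ : Measure (X × X)) [IsProbabilityMeasure γ]
    (hfin : ∫⁻ p, c p ∂γ < ⊤)
    (hdual : ∀ ε : ℝ, 0 < ε → ∃ φ ψ : X → ℝ, Measurable φ ∧ Measurable ψ ∧
      Integrable (fun p : X × X => φ p.1 + ψ p.2) γ ∧
      (∀ p : X × X, c p ≠ ⊤ → φ p.1 + ψ p.2 ≤ (c p).toReal) ∧
      (∫⁻ p, c p ∂γ).toReal - ε ≤ ∫ p : X × X, (φ p.1 + ψ p.2) ∂γ) :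
    ∃ Γ : Set (X × X), MeasurableSet Γ ∧ γ Γ = 1 ∧
      ∀ (N : ℕ) (hN : 2 ≤ N), ∀ p : Fin N → X × X, (∀ i, p i ∈ Γ) →
        ∑ i, c (p i) ≤
          ∑ i : Fin N, c ((p ⟨(i.1 + 1) % N, Nat.mod_lt _ (Nat.lt_of_lt_of_le Nat.zero_lt_two hN)⟩).1, (p i).2) := by
  choose φ ψ hφ hψ hint hle hge using fun n : ℕ => hdual ((1/2)^n) (by positivity)
  let r : ℕ → X × X → ENNReal := fun n p => ENNReal.ofReal ((c p).toReal - (φ n p.1 + ψ n p.2))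
  have hr : ∀ n, Measurable (r n) := fun n => by
    have := hφ n
    have := hψ n
    fun_prop
  have hcfin : ∀ᵐ p ∂γ, c p < ⊤ := ae_lt_top hc hfin.ne
  have hci : Integrable (fun p => (c p).toReal) γ := integrable_toReal_of_lintegral_ne_top hc.aemeasurable hfin.ne
  have hrl : ∀ n, ∫⁻ p, r n p ∂γ ≤ (1/2)^n := by
    intro n
    have hq := ofReal_integral_eq_lintegral_ofReal (hci.sub (hint n)) ?_
    · refine hq.symm.le.trans ?_
      simp only [Pi.sub_apply]
      rw [integral_sub hci (hint n), integral_toReal hc.aemeasurable hcfin]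
      have : (1/2 : ENNReal)^n = ENNReal.ofReal ((1/2)^n) := by
        rw [ENNReal.ofReal_pow (by norm_num)]
        congr 1
        rw [ENNReal.ofReal_div_of_pos (by norm_num)]; simp
      rw [this]
      apply ENNReal.ofReal_le_ofReal
      linarith [hge n]
    · filter_upwards [hcfin] with p hp
      have := hle n p hp.ne
      simp only [Pi.zero_apply, Pi.sub_apply]
      linarith
  have hsum : ∀ᵐ p ∂γ, ∑' n, r n p < ⊤ := by
    refine ae_lt_top (Measurable.tsum hr) ?_
    rw [lintegral_tsum (fun n => (hr n).aemeasurable)]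
    refine ne_top_of_le_ne_top ?_ (ENNReal.tsum_le_tsum hrl)
    simp [ENNReal.tsum_geometric]
  have hm : MeasurableSet {p : X × X | c p < ⊤ ∧ ∑' n, r n p < ⊤} :=
    (measurableSet_lt hc measurable_const).inter
      (measurableSet_lt (Measurable.tsum hr) measurable_const)
  refine ⟨{p | c p < ⊤ ∧ ∑' n, r n p < ⊤}, hm, ?_, ?_⟩
  · rw [prob_compl_eq_zero_iff hm |>.symm]
    exact ae_iff.1 (hcfin.and hsum)
  intro N hN p hp
  set σ : Fin N → Fin N := fun i => ⟨(i.1 + 1) % N, Nat.mod_lt _ (Nat.lt_of_lt_of_le Nat.zero_lt_two hN)⟩ with hσ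
  have hσi : Function.Injective σ := by
    intro i j hij
    simp only [hσ, Fin.mk.injEq] at hij
    have : i.1 ≡ j.1 [MOD N] := Nat.ModEq.add_right_cancel' 1 hij
    exact Fin.ext (this.eq_of_lt_of_lt i.2 j.2)
  have hσb : Function.Bijective σ := Finite.injective_iff_bijective.1 hσi
  change ∑ i, c (p i) ≤ ∑ i, c ((p (σ i)).1, (p i).2)
  by_cases htop : ∃ i, c ((p (σ i)).1, (p i).2) = ⊤
  · have : ∑ i, c ((p (σ i)).1, (p i).2) = ⊤ := ENNReal.sum_eq_top.2 (by simpa using htop)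
    rw [this]
    exact le_top
  push Not at htop
  have htop' : ∀ i, c (p i) ≠ ⊤ := fun i => (hp i).1.ne
  rw [← ENNReal.toReal_le_toReal (by simpa [ENNReal.sum_eq_top] using htop')
    (by simpa [ENNReal.sum_eq_top] using htop), ENNReal.toReal_sum (fun i _ => htop' i),
    ENNReal.toReal_sum (fun i _ => htop i)]
  have hlim : ∀ i, Filter.Tendsto (fun n => φ n (p i).1 + ψ n (p i).2) Filter.atTop
      (nhds (c (p i)).toReal) := by
    intro i
    have h0 := ENNReal.tendsto_atTop_zero_of_tsum_ne_top (hp i).2.ne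
    have h1 := (ENNReal.tendsto_toReal ENNReal.zero_ne_top).comp h0
    have h2 : ∀ n, (r n (p i)).toReal = (c (p i)).toReal - (φ n (p i).1 + ψ n (p i).2) := by
      intro n
      exact ENNReal.toReal_ofReal (by linarith [hle n (p i) (htop' i)])
    have h3 := h1.const_sub (c (p i)).toReal
    simpa [Function.comp_def, h2] using h3
  refine le_of_tendsto (tendsto_finsetSum _ (fun i _ => hlim i)) (Filter.Eventually.of_forall ?_)
  intro n
  rw [Finset.sum_add_distrib, ← Function.Bijective.sum_comp hσb (fun i => φ n (p i).1), ← Finset.sum_add_distrib]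
  exact Finset.sum_le_sum fun i _ => hle n ((p (σ i)).1, (p i).2) (htop i)

theorem dual_aux {X K : Type*} [MetricSpace X] [CompleteSpace X]
    [TopologicalSpace.SeparableSpace X] [MeasurableSpace X] [BorelSpace X]
    [MetricSpace K] [CompactSpace K] [MeasurableSpace K] [BorelSpace K]
    (e : X → K) (he : Topology.IsEmbedding e)
    (μ ν : Measure X) [IsProbabilityMeasure μ] [IsProbabilityMeasure ν]
    (c : X × X → ENNReal) (hc : LowerSemicontinuous c) (a : ℝ)
    (ha : ∀ γ' : Measure (X × X), IsProbabilityMeasure γ' →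
      γ'.map Prod.fst = μ → γ'.map Prod.snd = ν → 0 ≤ a →
      ¬ (∫⁻ p, c p ∂γ' ≤ ENNReal.ofReal a)) :
    ∃ φ ψ : C(K, ℝ), (∀ p : X × X, c p ≠ ⊤ → φ (e p.1) + ψ (e p.2) ≤ (c p).toReal) ∧
      ∫ x, φ (e x) ∂μ + ∫ y, ψ (e y) ∂ν = a := by
  have hX : Nonempty X := by
    by_contra h
    rw [not_nonempty_iff] at h
    have := measure_univ (μ := μ)
    simp [Set.univ_eq_empty_iff.2 h] at this
  have : SecondCountableTopology X := UniformSpace.secondCountable_of_separable X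
  have intX : ∀ (m : Measure X) [IsProbabilityMeasure m] (f : C(K, ℝ)),
      Integrable (fun x => f (e x)) m := by
    intro m _ f
    refine Integrable.of_bound (C := ‖f‖) ?_ (Filter.Eventually.of_forall fun x => f.norm_coe_le_norm _)
    exact (f.continuous.comp he.continuous).aestronglyMeasurable
  let e2 : X × X → K × K := Prod.map e e
  have he2 : Topology.IsEmbedding e2 := he.prodMap he
  have hme : MeasurableEmbedding e := he.continuous.measurableEmbedding he.injective
  have hme2 : MeasurableEmbedding e2 := he2.continuous.measurableEmbedding he2.injective
  by_contra hno
  push Not at hno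
  let P1 : C(K, ℝ) → C(K × K, ℝ) := fun φ => φ.comp ContinuousMap.fst
  let P2 : C(K, ℝ) → C(K × K, ℝ) := fun φ => φ.comp ContinuousMap.snd
  let U : Set C(K × K, ℝ) := {f | ∃ δ : ℝ, 0 < δ ∧ ∀ p, c p ≠ ⊤ → f (e2 p) + δ ≤ (c p).toReal}
  let T : Set C(K × K, ℝ) := {f | ∃ φ ψ : C(K, ℝ), f = P1 φ + P2 ψ ∧
    ∫ x, φ (e x) ∂μ + ∫ y, ψ (e y) ∂ν = a}
  have hUc : Convex ℝ U := by
    rintro f ⟨δ, hδ, hf⟩ g ⟨δ', hδ', hg⟩ s t hs ht hst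
    refine ⟨min δ δ', lt_min hδ hδ', fun p hp => ?_⟩
    have h1 := hf p hp
    have h2 := hg p hp
    have h3 := min_le_left δ δ'
    have h4 := min_le_right δ δ'
    simp only [ContinuousMap.add_apply, ContinuousMap.smul_apply, smul_eq_mul]
    obtain rfl : t = 1 - s := by linarith
    nlinarith
  have hUo : IsOpen U := by
    rw [Metric.isOpen_iff]
    rintro f ⟨δ, hδ, hf⟩
    refine ⟨δ / 2, by positivity, fun g hg => ⟨δ / 2, by positivity, fun p hp => ?_⟩⟩
    have h1 := hf p hp
    have h2 := (ContinuousMap.dist_apply_le_dist (f := g) (g := f) (e2 p)).trans_lt (Metric.mem_ball.1 hg)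
    rw [Real.dist_eq, abs_lt] at h2
    linarith
  have hTc : Convex ℝ T := by
    rintro f ⟨φ, ψ, rfl, h⟩ g ⟨φ', ψ', rfl, h'⟩ s t hs ht hst
    refine ⟨s • φ + t • φ', s • ψ + t • ψ', ?_, ?_⟩
    · ext z
      simp [P1, P2]
      ring
    · simp only [ContinuousMap.add_apply, ContinuousMap.smul_apply, smul_eq_mul]
      rw [integral_add ((intX _ _).const_mul _) ((intX _ _).const_mul _),
        integral_add ((intX _ _).const_mul _) ((intX _ _).const_mul _)]
      simp only [integral_const_mul]
      obtain rfl : t = 1 - s := by linarith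
      linear_combination s * h + (1 - s) * h'
  have hdisj : Disjoint U T := by
    rw [Set.disjoint_left]
    rintro f ⟨δ, hδ, hf⟩ ⟨φ, ψ, rfl, h⟩
    refine hno φ ψ (fun p hp => ?_) h
    have := hf p hp
    simp only [P1, P2, ContinuousMap.add_apply, ContinuousMap.comp_apply] at this
    change φ (e p.1) + ψ (e p.2) + δ ≤ _ at this
    linarith
  obtain ⟨L, u, hLU, hLT⟩ := geometric_hahn_banach_open hUc hUo hTc hdisj
  -- positivity
  have hLpos : ∀ f : C(K × K, ℝ), (∀ z, 0 ≤ f z) → 0 ≤ L f := by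
    intro f hf
    by_contra! hneg
    have hmem : ∀ t : ℝ, 0 ≤ t → (-1 - t • f : C(K × K, ℝ)) ∈ U := by
      intro t ht
      refine ⟨1, one_pos, fun p _ => ?_⟩
      have := mul_nonneg ht (hf (e2 p))
      have : 0 ≤ (c p).toReal := ENNReal.toReal_nonneg
      simp only [ContinuousMap.sub_apply, ContinuousMap.neg_apply, ContinuousMap.one_apply,
        ContinuousMap.smul_apply, smul_eq_mul]
      linarith
    have h0 := hLU _ (hmem 0 le_rfl)
    have h1 := hLU _ (hmem ((u - L (-1)) / (- L f)) (by
      simp only [zero_smul, sub_zero] at h0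
      exact div_nonneg (by linarith) (by linarith)))
    rw [map_sub, map_smul, smul_eq_mul] at h1
    have : (u - L (-1)) / (- L f) * L f = -(u - L (-1)) := by
      rw [div_neg, neg_mul, div_mul_cancel₀ _ hneg.ne]
    linarith
  have haT : (a • 1 : C(K × K, ℝ)) ∈ T := by
    refine ⟨a • 1, 0, ?_, ?_⟩
    · ext z; simp [P1, P2]
    · simp
  have hua : u ≤ a * L 1 := by simpa using hLT _ haT
  have hL1 : 0 < L 1 := by
    have h0 : 0 ≤ L 1 := hLpos 1 (fun z => by simp)
    refine lt_of_le_of_ne h0 fun h => ?_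
    have : (-1 : C(K × K, ℝ)) ∈ U := ⟨1, one_pos, fun p _ => by simp⟩
    have := hLU _ this
    rw [map_neg] at this
    rw [← h] at this hua
    linarith
  have hzero : ∀ φ ψ : C(K, ℝ), ∫ x, φ (e x) ∂μ + ∫ y, ψ (e y) ∂ν = 0 → L (P1 φ + P2 ψ) = 0 := by
    intro φ ψ h
    have hmem : ∀ t : ℝ, a • 1 + t • (P1 φ + P2 ψ) ∈ T := by
      intro t
      refine ⟨a • 1 + t • φ, t • ψ, ?_, ?_⟩
      · ext z; simp [P1, P2]; ring
      · simp only [ContinuousMap.add_apply, ContinuousMap.smul_apply, smul_eq_mul,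
          ContinuousMap.one_apply, mul_one]
        rw [integral_add (integrable_const _) ((intX _ _).const_mul _)]
        simp only [integral_const_mul, integral_const, probReal_univ, one_smul]
        linear_combination t * h
    by_contra hne
    have := hLT _ (hmem ((u - a * L 1 - 1) / L (P1 φ + P2 ψ)))
    rw [map_add, map_smul, map_smul, smul_eq_mul, smul_eq_mul, div_mul_cancel₀ _ hne] at this
    linarith
  have hP1 : ∀ φ, L (P1 φ) = (∫ x, φ (e x) ∂μ) * L 1 := by
    intro φ
    have := hzero (φ - (∫ x, φ (e x) ∂μ) • 1) 0 (by
      simp only [ContinuousMap.sub_apply, ContinuousMap.smul_apply, smul_eq_mul,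
          ContinuousMap.one_apply, mul_one]
      rw [integral_sub (intX _ _) (integrable_const _)]
      simp)
    have h2 : P1 (φ - (∫ x, φ (e x) ∂μ) • 1) + P2 0 = P1 φ - (∫ x, φ (e x) ∂μ) • 1 := by
      ext z; simp [P1, P2]
    rw [h2, map_sub, map_smul, smul_eq_mul] at this
    linarith
  have hP2 : ∀ φ, L (P2 φ) = (∫ x, φ (e x) ∂ν) * L 1 := by
    intro φ
    have := hzero 0 (φ - (∫ x, φ (e x) ∂ν) • 1) (by
      simp only [ContinuousMap.sub_apply, ContinuousMap.smul_apply, smul_eq_mul,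
          ContinuousMap.one_apply, mul_one]
      rw [integral_sub (intX _ _) (integrable_const _)]
      simp)
    have h2 : P1 0 + P2 (φ - (∫ x, φ (e x) ∂ν) • 1) = P2 φ - (∫ x, φ (e x) ∂ν) • 1 := by
      ext z; simp [P1, P2]
    rw [h2, map_sub, map_smul, smul_eq_mul] at this
    linarith
  obtain ⟨m, hm, hmL⟩ := riesz_aux ((L 1)⁻¹ • L.toLinearMap) (fun f hf => by
      simpa using mul_nonneg (inv_nonneg.2 hL1.le) (hLpos f hf)) (by
      simpa using inv_mul_cancel₀ hL1.ne')
  have hmL' : ∀ f : C(K × K, ℝ), ∫ z, f z ∂m = (L 1)⁻¹ * L f := fun f => by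
    rw [hmL]; rfl
  have hm1 : m.map Prod.fst = μ.map e := by
    have : IsProbabilityMeasure (m.map (Prod.fst : K × K → K)) :=
      Measure.isProbabilityMeasure_map measurable_fst.aemeasurable
    have : IsProbabilityMeasure (μ.map e) :=
      Measure.isProbabilityMeasure_map hme.measurable.aemeasurable
    refine ext_of_forall_integral_eq_of_IsFiniteMeasure fun f => ?_
    rw [integral_map measurable_fst.aemeasurable f.continuous.aestronglyMeasurable,
      integral_map hme.measurable.aemeasurable f.continuous.aestronglyMeasurable]
    have := hmL' (P1 f.toContinuousMap)
    rw [hP1] at this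
    refine Eq.trans this ?_
    rw [mul_comm, mul_assoc, mul_inv_cancel₀ hL1.ne', mul_one]
    rfl
  have hm2 : m.map Prod.snd = ν.map e := by
    have : IsProbabilityMeasure (m.map (Prod.snd : K × K → K)) :=
      Measure.isProbabilityMeasure_map measurable_snd.aemeasurable
    have : IsProbabilityMeasure (ν.map e) :=
      Measure.isProbabilityMeasure_map hme.measurable.aemeasurable
    refine ext_of_forall_integral_eq_of_IsFiniteMeasure fun f => ?_
    rw [integral_map measurable_snd.aemeasurable f.continuous.aestronglyMeasurable,
      integral_map hme.measurable.aemeasurable f.continuous.aestronglyMeasurable]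
    have := hmL' (P2 f.toContinuousMap)
    rw [hP2] at this
    refine Eq.trans this ?_
    rw [mul_comm, mul_assoc, mul_inv_cancel₀ hL1.ne', mul_one]
    rfl
  have hr1 : ∀ᵐ z ∂m, z.1 ∈ Set.range e := by
    have : ∀ᵐ z ∂(m.map Prod.fst), z ∈ Set.range e := by
      rw [hm1, ae_map_iff hme.measurable.aemeasurable (p := (· ∈ Set.range e)) hme.measurableSet_range]
      exact Filter.Eventually.of_forall fun x => ⟨x, rfl⟩
    rwa [ae_map_iff measurable_fst.aemeasurable (p := (· ∈ Set.range e)) hme.measurableSet_range] at this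
  have hr2 : ∀ᵐ z ∂m, z.2 ∈ Set.range e := by
    have : ∀ᵐ z ∂(m.map Prod.snd), z ∈ Set.range e := by
      rw [hm2, ae_map_iff hme.measurable.aemeasurable (p := (· ∈ Set.range e)) hme.measurableSet_range]
      exact Filter.Eventually.of_forall fun x => ⟨x, rfl⟩
    rwa [ae_map_iff measurable_snd.aemeasurable (p := (· ∈ Set.range e)) hme.measurableSet_range] at this
  have hr : ∀ᵐ z ∂m, z ∈ Set.range e2 := by
    filter_upwards [hr1, hr2] with z ⟨x, hx⟩ ⟨y, hy⟩
    exact ⟨(x, y), Prod.ext hx hy⟩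
  have hmap : (m.comap e2).map e2 = m := by
    rw [hme2.map_comap, Measure.restrict_eq_self_of_ae_mem hr]
  have hprob : IsProbabilityMeasure (m.comap e2) := by
    constructor
    have : (m.comap e2).map e2 Set.univ = 1 := by rw [hmap]; exact measure_univ
    rwa [Measure.map_apply hme2.measurable MeasurableSet.univ, Set.preimage_univ] at this
  have inj : ∀ m1 m2 : Measure X, m1.map e = m2.map e → m1 = m2 := by
    intro m1 m2 h
    rw [← hme.comap_map m1, h, hme.comap_map]
  have hg1 : (m.comap e2).map Prod.fst = μ := by
    apply inj
    rw [← hm1, Measure.map_map hme.measurable measurable_fst]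
    conv_rhs => rw [← hmap]
    rw [Measure.map_map measurable_fst hme2.measurable]
    rfl
  have hg2 : (m.comap e2).map Prod.snd = ν := by
    apply inj
    rw [← hm2, Measure.map_map hme.measurable measurable_snd]
    conv_rhs => rw [← hmap]
    rw [Measure.map_map measurable_snd hme2.measurable]
    rfl
  obtain ⟨f, hf0, hfc, hfl⟩ := approx_aux e2 he2 c hc
  have hfa : ∀ n, ∫ z, f n z ∂m ≤ a := by
    intro n
    refine le_of_forall_pos_le_add fun δ hδ => ?_
    have hmem : f n - δ • 1 ∈ U := by
      refine ⟨δ, hδ, fun p hp => ?_⟩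
      have := ENNReal.toReal_mono hp (hfc n p)
      rw [ENNReal.toReal_ofReal (hf0 _ _)] at this
      simpa using this
    have := (hLU _ hmem).trans_le hua
    rw [map_sub, map_smul, smul_eq_mul] at this
    rw [hmL', inv_mul_le_iff₀ hL1]
    linarith
  have ha0 : 0 ≤ a := (integral_nonneg (hf0 0)).trans (hfa 0)
  refine ha (m.comap e2) hprob hg1 hg2 ha0 ?_
  calc ∫⁻ p, c p ∂(m.comap e2)
      ≤ ∫⁻ p, Filter.liminf (fun n => ENNReal.ofReal (f n (e2 p))) Filter.atTop ∂(m.comap e2) :=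
        lintegral_mono hfl
    _ ≤ Filter.liminf (fun n => ∫⁻ p, ENNReal.ofReal (f n (e2 p)) ∂(m.comap e2)) Filter.atTop :=
        lintegral_liminf_le fun n =>
          ((f n).continuous.comp he2.continuous).measurable.ennreal_ofReal
    _ ≤ Filter.liminf (fun _ : ℕ => ENNReal.ofReal a) Filter.atTop := by
        refine Filter.liminf_le_liminf (Filter.Eventually.of_forall fun n => ?_)
        have h1 : ∫⁻ p, ENNReal.ofReal (f n (e2 p)) ∂(m.comap e2)
            = ∫⁻ z, ENNReal.ofReal (f n z) ∂m := by
          conv_rhs => rw [← hmap]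
          rw [hme2.lintegral_map]
        rw [h1, ← ofReal_integral_eq_lintegral_ofReal]
        · exact ENNReal.ofReal_le_ofReal (hfa n)
        · exact Integrable.of_bound (C := ‖f n‖) (f n).continuous.aestronglyMeasurable
            (Filter.Eventually.of_forall fun x => (f n).norm_coe_le_norm _)
        · exact Filter.Eventually.of_forall (hf0 n)
    _ = ENNReal.ofReal a := Filter.liminf_const _

theorem stmt_1 {X : Type*} [MetricSpace X] [CompleteSpace X]
    [TopologicalSpace.SeparableSpace X] [MeasurableSpace X] [BorelSpace X]
    (μ ν : Measure X) [IsProbabilityMeasure μ] [IsProbabilityMeasure ν]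
    (c : X × X → ENNReal) (hc : LowerSemicontinuous c)
    (γ : Measure (X × X)) [IsProbabilityMeasure γ]
    (hγ₁ : γ.map Prod.fst = μ) (hγ₂ : γ.map Prod.snd = ν)
    (hopt : ∀ γ' : Measure (X × X), IsProbabilityMeasure γ' →
      γ'.map Prod.fst = μ → γ'.map Prod.snd = ν →
      ∫⁻ p, c p ∂γ ≤ ∫⁻ p, c p ∂γ')
    (hfin : ∫⁻ p, c p ∂γ < ⊤) :
    ∃ Γ : Set (X × X), MeasurableSet Γ ∧ γ Γ = 1 ∧
      ∀ (N : ℕ) (hN : 2 ≤ N), ∀ p : Fin N → X × X, (∀ i, p i ∈ Γ) →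
        ∑ i, c (p i) ≤
          ∑ i : Fin N, c ((p ⟨(i.1 + 1) % N, Nat.mod_lt _ (Nat.lt_of_lt_of_le Nat.zero_lt_two hN)⟩).1, (p i).2) := by
  have : SecondCountableTopology X := UniformSpace.secondCountable_of_separable X
  refine final_aux c hc.measurable γ hfin fun ε hε => ?_
  obtain ⟨e, he⟩ := Metric.PiNatEmbed.exists_embedding_to_hilbert_cube (X := X)
  letI : MetricSpace (ℕ → unitInterval) := TopologicalSpace.metrizableSpaceMetric _
  obtain ⟨φ, ψ, hle, heq⟩ := dual_aux e he μ ν c hc ((∫⁻ p, c p ∂γ).toReal - ε) (by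
    intro γ' h1 h2 h3 h0 h
    have h4 := (hopt γ' h1 h2 h3).trans h
    have h5 := ENNReal.toReal_mono ENNReal.ofReal_ne_top h4
    rw [ENNReal.toReal_ofReal h0] at h5
    linarith)
  have hcφ : Continuous (fun x => φ (e x)) := φ.continuous.comp he.continuous
  have hcψ : Continuous (fun x => ψ (e x)) := ψ.continuous.comp he.continuous
  have i1 : Integrable (fun p : X × X => φ (e p.1)) γ :=
    Integrable.of_bound (C := ‖φ‖) (hcφ.comp continuous_fst).aestronglyMeasurable
      (Filter.Eventually.of_forall fun x => φ.norm_coe_le_norm _)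
  have i2 : Integrable (fun p : X × X => ψ (e p.2)) γ :=
    Integrable.of_bound (C := ‖ψ‖) (hcψ.comp continuous_snd).aestronglyMeasurable
      (Filter.Eventually.of_forall fun x => ψ.norm_coe_le_norm _)
  refine ⟨fun x => φ (e x), fun y => ψ (e y), hcφ.measurable, hcψ.measurable, i1.add i2, hle, ?_⟩
  rw [integral_add i1 i2, ← heq, ← hγ₁, ← hγ₂,
    integral_map measurable_fst.aemeasurable hcφ.aestronglyMeasurable,
    integral_map measurable_snd.aemeasurable hcψ.aestronglyMeasurable]
end

section
/- Let X be a complete separable metric space with distance d and let μ, ν be compactly supported Borel probability measures on X. Then there exists a 1-Lipschitz function u : X → ℝ such that (a) ∫ u dμ − ∫ u dν = inf over γ ∈ Π(μ,ν) of ∫ d(x,y) dγ(x,y), and (b) a transport plan γ ∈ Π(μ,ν) attains this infimum if and only if u(x) − u(y) = d(x,y) for γ-almost every (x,y). -/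
open MeasureTheory
open scoped CompactlySupported BoundedContinuousFunction

theorem ot_hahn_banach {E : Type*} [AddCommGroup E] [Module ℝ E] (N : E → ℝ)
    (N_hom : ∀ c : ℝ, 0 < c → ∀ x, N (c • x) = c * N x)
    (N_add : ∀ x y, N (x + y) ≤ N x + N y) (x₀ : E) :
    ∃ g : E →ₗ[ℝ] ℝ, g x₀ = N x₀ ∧ ∀ x, g x ≤ N x := by
  have N_0 : N 0 = 0 := by
    have := N_hom 2 (by norm_num) 0
    rw [smul_zero] at this
    linarith
  have H : ∀ c : ℝ, c • x₀ = 0 → (RingHom.id ℝ) c • N x₀ = 0 := by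
    intro c hc
    rcases smul_eq_zero.1 hc with h | h
    · simp [h]
    · simp [h, N_0]
  obtain ⟨g, hg, hgN⟩ := exists_extension_of_le_sublinear
    (LinearPMap.mkSpanSingleton' x₀ (N x₀) H) N N_hom N_add (by
      rintro ⟨x, hx⟩
      obtain ⟨c, rfl⟩ := Submodule.mem_span_singleton.1 hx
      rw [LinearPMap.mkSpanSingleton'_apply]
      simp only [RingHom.id_apply, smul_eq_mul]
      rcases lt_trichotomy c 0 with h | h | h
      · have h1 := N_add (c • x₀) ((-c) • x₀)
        rw [N_hom (-c) (by linarith), ← add_smul, add_neg_cancel, zero_smul, N_0] at h1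
        linarith
      · simp [h, N_0]
      · rw [N_hom c h])
  refine ⟨g, ?_, hgN⟩
  have := hg ⟨x₀, Submodule.mem_span_singleton_self x₀⟩
  exact this.trans (LinearPMap.mkSpanSingleton'_apply_self x₀ (N x₀) H _)

theorem ot_rmk {Z : Type*} [TopologicalSpace Z] [T2Space Z] [CompactSpace Z] [MeasurableSpace Z]
    [BorelSpace Z] (f : C(Z, ℝ) →ₗ[ℝ] ℝ) (hf : ∀ h : C(Z, ℝ), (∀ z, 0 ≤ h z) → 0 ≤ f h) :
    ∃ γ : Measure Z, IsFiniteMeasure γ ∧ ∀ h : C(Z, ℝ), ∫ z, h z ∂γ = f h := by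
  let L : C_c(Z, ℝ) →ₗ[ℝ] ℝ :=
    { toFun := fun h => f h.toContinuousMap
      map_add' := fun a b => f.map_add a.toContinuousMap b.toContinuousMap
      map_smul' := fun c a => f.map_smul c a.toContinuousMap }
  let Λ : C_c(Z, ℝ) →ₚ[ℝ] ℝ := PositiveLinearMap.mk₀ L (fun h hh => hf h.toContinuousMap hh)
  refine ⟨RealRMK.rieszMeasure Λ, inferInstance, fun h => ?_⟩
  exact RealRMK.integral_rieszMeasure Λ (CompactlySupportedContinuousMap.continuousMapEquiv h)

theorem ot_int {Z : Type*} [TopologicalSpace Z] [CompactSpace Z] [MeasurableSpace Z]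
    [OpensMeasurableSpace Z] (μ : Measure Z) [IsFiniteMeasure μ] (h : Z → ℝ) (hh : Continuous h) :
    Integrable h μ :=
  (BoundedContinuousFunction.mkOfCompact ⟨h, hh⟩).integrable μ

theorem ot_max {K : Type*} [MetricSpace K] [CompactSpace K] [Nonempty K]
    [MeasurableSpace K] [BorelSpace K] (μ ν : Measure K) [IsProbabilityMeasure μ]
    [IsProbabilityMeasure ν] :
    ∃ u : K → ℝ, LipschitzWith 1 u ∧ ∀ v : K → ℝ, LipschitzWith 1 v →
      ∫ x, v x ∂μ - ∫ x, v x ∂ν ≤ ∫ x, u x ∂μ - ∫ x, u x ∂ν := by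
  obtain ⟨x₀⟩ := ‹Nonempty K›
  let A : Set (K →ᵇ ℝ) := {u | LipschitzWith 1 u ∧ u x₀ = 0}
  have hbd : ∀ f ∈ A, ∀ x, |f x| ≤ Metric.diam (Set.univ : Set K) := by
    intro f hf x
    have h1 := hf.1.dist_le_mul x x₀
    rw [hf.2, Real.dist_eq, sub_zero] at h1
    refine h1.trans ?_
    simpa using Metric.dist_le_diam_of_mem isCompact_univ.isBounded (Set.mem_univ x) (Set.mem_univ x₀)
  have hA : IsCompact A := by
    refine BoundedContinuousFunction.arzela_ascoli₂ (Set.Icc (-Metric.diam (Set.univ : Set K)) (Metric.diam (Set.univ : Set K)))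
      isCompact_Icc A ?_ (fun f x hf => abs_le.1 (hbd f hf x)) ?_
    · have : A = (⋂ x, ⋂ y, {u : K →ᵇ ℝ | dist (u x) (u y) ≤ dist x y}) ∩ {u | u x₀ = 0} := by
        ext u
        simp [A, lipschitzWith_iff_dist_le_mul]
      rw [this]
      refine IsClosed.inter (isClosed_iInter fun x => isClosed_iInter fun y => ?_) ?_
      · exact isClosed_le ((continuous_eval_const x).dist
          (continuous_eval_const y)) continuous_const
      · exact isClosed_eq (continuous_eval_const x₀) continuous_const
    · exact (LipschitzWith.uniformEquicontinuous _ 1 (fun f => f.2.1)).equicontinuous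
  have hne : A.Nonempty := ⟨0, LipschitzWith.const 0 |>.weaken (by simp), rfl⟩
  have hc : ∀ (m : Measure K) [IsProbabilityMeasure m], Continuous fun u : K →ᵇ ℝ => ∫ x, u x ∂m := by
    intro m _
    refine LipschitzWith.continuous (K := 1) (LipschitzWith.of_dist_le_mul fun u v => ?_)
    rw [Real.dist_eq, ← integral_sub (u.integrable m) (v.integrable m)]
    have := norm_integral_le_of_norm_le_const (μ := m) (f := fun x => u x - v x) (C := dist u v)
      (Filter.Eventually.of_forall fun x => by
        rw [← dist_eq_norm]; exact BoundedContinuousFunction.dist_coe_le_dist x)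
    simpa using this
  obtain ⟨u, huA, hu⟩ := hA.exists_isMaxOn hne ((hc μ).sub (hc ν)).continuousOn
  refine ⟨u, huA.1, fun v hv => ?_⟩
  let w : K →ᵇ ℝ := BoundedContinuousFunction.mkOfCompact ⟨fun x => v x - v x₀, by
    have := hv.continuous
    fun_prop⟩
  have hw : w ∈ A := by
    refine ⟨LipschitzWith.of_dist_le_mul fun x y => ?_, by simp [w]⟩
    have := hv.dist_le_mul x y
    simpa [w, Real.dist_eq] using this
  have h1 := hu hw
  have h2 : ∀ (m : Measure K) [IsProbabilityMeasure m], ∫ x, w x ∂m = ∫ x, v x ∂m - v x₀ := by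
    intro m _
    simp only [w, BoundedContinuousFunction.mkOfCompact_apply, ContinuousMap.coe_mk]
    rw [integral_sub (ot_int m v hv.continuous) (integrable_const _)]
    simp
  have h3 : ∫ x, w x ∂μ - ∫ x, w x ∂ν ≤ ∫ x, u x ∂μ - ∫ x, u x ∂ν := h1
  rw [h2 μ, h2 ν] at h3
  linarith

theorem ot_ctrans {K : Type*} [MetricSpace K] [CompactSpace K] [Nonempty K]
    (φ ψ : C(K, ℝ)) (h : ∀ x y, -dist x y ≤ φ x + ψ y) :
    ∃ u : K → ℝ, LipschitzWith 1 u ∧ (∀ x, -φ x ≤ u x) ∧ ∀ x, -ψ x ≤ - u x := by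
  have hb : ∀ x, BddBelow (Set.range fun y => dist x y + ψ y) := fun x =>
    ⟨-φ x, by rintro _ ⟨y, rfl⟩; have := h x y; simp only; linarith⟩
  refine ⟨fun x => ⨅ y, (dist x y + ψ y), ?_, fun x => ?_, fun x => ?_⟩
  · refine LipschitzWith.of_le_add fun x z => ?_
    rw [← sub_le_iff_le_add]
    refine le_ciInf fun y => ?_
    have h1 := ciInf_le (hb x) y
    have := dist_triangle x z y
    linarith
  · refine le_ciInf fun y => ?_
    have := h x y
    linarith
  · have h1 := ciInf_le (hb x) x
    simp only [dist_self] at h1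
    linarith

theorem ot_dual {K : Type*} [MetricSpace K] [CompactSpace K] [Nonempty K]
    [MeasurableSpace K] [BorelSpace K] (μ ν : Measure K) [IsProbabilityMeasure μ]
    [IsProbabilityMeasure ν] :
    ∃ u : K → ℝ, LipschitzWith 1 u ∧ ∃ γ : Measure (K × K), IsProbabilityMeasure γ ∧
      γ.map Prod.fst = μ ∧ γ.map Prod.snd = ν ∧
      ∫ p, dist p.1 p.2 ∂γ ≤ ∫ x, u x ∂μ - ∫ x, u x ∂ν := by
  obtain ⟨u, hu, hmax⟩ := ot_max μ ν
  refine ⟨u, hu, ?_⟩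
  have hI : ∀ (m : Measure K) [IsProbabilityMeasure m] (φ : C(K, ℝ)), Integrable φ m :=
    fun m _ φ => ot_int m φ φ.continuous
  let S : C(K × K, ℝ) → Set ℝ := fun h => {r | ∃ φ ψ : C(K, ℝ),
    (∀ x y, h (x, y) ≤ φ x + ψ y) ∧ r = ∫ x, φ x ∂μ + ∫ x, ψ x ∂ν}
  have hSlow : ∀ h, ∀ r ∈ S h, ∫ z, h z ∂(μ.prod ν) ≤ r := by
    rintro h r ⟨φ, ψ, hle, rfl⟩
    have e : ∫ z, (φ z.1 + ψ z.2) ∂(μ.prod ν) = ∫ x, φ x ∂μ + ∫ x, ψ x ∂ν := by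
      rw [integral_add (ot_int _ _ (by fun_prop)) (ot_int _ _ (by fun_prop))]
      rw [integral_fun_fst (μ := μ) (ν := ν) (fun x => φ x),
        integral_fun_snd (μ := μ) (ν := ν) (fun x => ψ x)]
      simp
    rw [← e]
    exact integral_mono (ot_int _ _ h.continuous) (ot_int _ _ (by fun_prop)) fun z => hle z.1 z.2
  have hSbdd : ∀ h, BddBelow (S h) := fun h => ⟨_, fun r hr => hSlow h r hr⟩
  have hSne : ∀ h, (S h).Nonempty := fun h =>
    ⟨_, ContinuousMap.const K ‖h‖, 0, fun x y => by
      simpa using (le_abs_self _).trans (h.norm_coe_le_norm (x, y)), rfl⟩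
  let N : C(K × K, ℝ) → ℝ := fun h => sInf (S h)
  have N_le : ∀ h (φ ψ : C(K, ℝ)), (∀ x y, h (x, y) ≤ φ x + ψ y) →
      N h ≤ ∫ x, φ x ∂μ + ∫ x, ψ x ∂ν := fun h φ ψ hle =>
    csInf_le (hSbdd h) ⟨φ, ψ, hle, rfl⟩
  have N_add : ∀ a b, N (a + b) ≤ N a + N b := by
    intro a b
    rw [← sub_le_iff_le_add]
    refine le_csInf (hSne a) ?_
    rintro _ ⟨φ, ψ, hle, rfl⟩
    rw [sub_le_comm]
    refine le_csInf (hSne b) ?_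
    rintro _ ⟨φ', ψ', hle', rfl⟩
    have := N_le (a + b) (φ + φ') (ψ + ψ') (fun x y => by
      have := hle x y
      have := hle' x y
      simp only [ContinuousMap.add_apply]
      linarith)
    simp only [ContinuousMap.add_apply] at this
    rw [integral_add (hI μ φ) (hI μ φ'), integral_add (hI ν ψ) (hI ν ψ')] at this
    linarith
  have N_hom_le : ∀ c : ℝ, 0 < c → ∀ h, N (c • h) ≤ c * N h := by
    intro c hc h
    rw [← div_le_iff₀' hc]
    refine le_csInf (hSne h) ?_
    rintro _ ⟨φ, ψ, hle, rfl⟩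
    rw [div_le_iff₀' hc]
    have := N_le (c • h) (c • φ) (c • ψ) (fun x y => by
      simp only [ContinuousMap.smul_apply, smul_eq_mul, ← mul_add]
      exact mul_le_mul_of_nonneg_left (hle x y) hc.le)
    simp only [ContinuousMap.smul_apply, smul_eq_mul, integral_const_mul] at this
    linarith
  have N_hom : ∀ c : ℝ, 0 < c → ∀ h, N (c • h) = c * N h := by
    intro c hc h
    refine le_antisymm (N_hom_le c hc h) ?_
    have := N_hom_le c⁻¹ (inv_pos.2 hc) (c • h)
    rw [smul_smul, inv_mul_cancel₀ hc.ne', one_smul] at this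
    rwa [← div_eq_inv_mul, le_div_iff₀' hc] at this
  let D : C(K × K, ℝ) := ⟨fun p => - dist p.1 p.2, by fun_prop⟩
  obtain ⟨f, hfD, hfN⟩ := ot_hahn_banach N N_hom N_add D
  obtain ⟨γ, hγ, hγf⟩ := ot_rmk f (fun h hh => by
    have h1 := hfN (-h)
    have h2 := N_le (-h) 0 0 (fun x y => by simpa using hh (x, y))
    simp at h1 h2
    linarith)
  have hf1 : ∀ φ ψ : C(K, ℝ), f (φ.comp ContinuousMap.fst + ψ.comp ContinuousMap.snd) =
      ∫ x, φ x ∂μ + ∫ x, ψ x ∂ν := by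
    intro φ ψ
    refine le_antisymm ((hfN _).trans (N_le _ φ ψ fun x y => by simp)) ?_
    have h1 := (hfN (-(φ.comp ContinuousMap.fst + ψ.comp ContinuousMap.snd))).trans
      (N_le _ (-φ) (-ψ) fun x y => by simp [add_comm])
    rw [map_neg] at h1
    simp only [ContinuousMap.neg_apply, integral_neg] at h1
    linarith
  have hm1 : γ.map Prod.fst = μ := by
    refine ext_of_forall_integral_eq_of_IsFiniteMeasure fun g => ?_
    rw [integral_map (by fun_prop) (by fun_prop)]
    have h1 := hf1 g.toContinuousMap 0
    rw [← hγf] at h1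
    simpa using h1
  have hm2 : γ.map Prod.snd = ν := by
    refine ext_of_forall_integral_eq_of_IsFiniteMeasure fun g => ?_
    rw [integral_map (by fun_prop) (by fun_prop)]
    have h1 := hf1 0 g.toContinuousMap
    rw [← hγf] at h1
    simpa using h1
  have hp : IsProbabilityMeasure γ := by
    constructor
    have : (γ.map Prod.fst) Set.univ = 1 := by rw [hm1]; simp
    rwa [Measure.map_apply measurable_fst MeasurableSet.univ, Set.preimage_univ] at this
  refine ⟨γ, hp, hm1, hm2, ?_⟩
  have h1 : ∫ p, dist p.1 p.2 ∂γ = - N D := by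
    rw [← hfD, ← hγf]
    simp [D, integral_neg]
  rw [h1, neg_le]
  refine le_csInf (hSne D) ?_
  rintro _ ⟨φ, ψ, hle, rfl⟩
  obtain ⟨v, hv, hv1, hv2⟩ := ot_ctrans φ ψ hle
  have h2 := hmax v hv
  have h3 := integral_mono (hI μ φ).neg (ot_int μ v hv.continuous) hv1
  have h4 := integral_mono (hI ν ψ).neg (ot_int ν v hv.continuous).neg hv2
  simp only [Pi.neg_apply, integral_neg] at h3 h4
  linarith

theorem stmt_2 {X : Type*} [MetricSpace X] [CompleteSpace X]
    [TopologicalSpace.SeparableSpace X] [MeasurableSpace X] [BorelSpace X]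
    (μ ν : Measure X) [IsProbabilityMeasure μ] [IsProbabilityMeasure ν]
    (hμ : ∃ K : Set X, IsCompact K ∧ μ Kᶜ = 0)
    (hν : ∃ K : Set X, IsCompact K ∧ ν Kᶜ = 0) :
    ∃ u : X → ℝ, LipschitzWith 1 u ∧
      (∫ x, u x ∂μ - ∫ y, u y ∂ν =
        sInf {r : ℝ | ∃ γ : Measure (X × X), IsProbabilityMeasure γ ∧
          γ.map Prod.fst = μ ∧ γ.map Prod.snd = ν ∧ r = ∫ p, dist p.1 p.2 ∂γ}) ∧
      ∀ γ : Measure (X × X), IsProbabilityMeasure γ →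
        γ.map Prod.fst = μ → γ.map Prod.snd = ν →
        ((∫ p, dist p.1 p.2 ∂γ = ∫ x, u x ∂μ - ∫ y, u y ∂ν) ↔
          (∀ᵐ p ∂γ, u p.1 - u p.2 = dist p.1 p.2)) := by
  have : SecondCountableTopology X := UniformSpace.secondCountable_of_separable X
  obtain ⟨K, hK, hKμ, hKν⟩ : ∃ K : Set X, IsCompact K ∧ μ Kᶜ = 0 ∧ ν Kᶜ = 0 := by
    obtain ⟨K₁, h1, h1'⟩ := hμ
    obtain ⟨K₂, h2, h2'⟩ := hν
    refine ⟨K₁ ∪ K₂, h1.union h2, measure_mono_null ?_ h1', measure_mono_null ?_ h2'⟩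
    · exact Set.compl_subset_compl.2 Set.subset_union_left
    · exact Set.compl_subset_compl.2 Set.subset_union_right
  have hKm : MeasurableSet K := hK.measurableSet
  have : CompactSpace K := isCompact_iff_compactSpace.1 hK
  have hmap : ∀ m : Measure X, m Kᶜ = 0 → (m.comap ((↑) : K → X)).map (↑) = m := by
    intro m hm
    rw [map_comap_subtype_coe hKm]
    exact Measure.restrict_eq_self_of_ae_mem (by rwa [ae_iff])
  have hprob : ∀ m : Measure X, IsProbabilityMeasure m → m Kᶜ = 0 →
      IsProbabilityMeasure (m.comap ((↑) : K → X)) := by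
    intro m hmp hm
    constructor
    have : ((m.comap ((↑) : K → X)).map ((↑) : K → X)) Set.univ = 1 := by rw [hmap m hm]; simp
    rwa [Measure.map_apply measurable_subtype_coe MeasurableSet.univ, Set.preimage_univ] at this
  have := hprob μ inferInstance hKμ
  have := hprob ν inferInstance hKν
  have : Nonempty K := nonempty_of_isProbabilityMeasure (μ.comap ((↑) : K → X))
  obtain ⟨u₀, hu₀, γ₀, hγ₀, hm1, hm2, hle⟩ :=
    ot_dual (μ.comap ((↑) : K → X)) (ν.comap ((↑) : K → X))
  obtain ⟨u, hu, hext⟩ : ∃ u : X → ℝ, LipschitzWith 1 u ∧ ∀ x : K, u x = u₀ x := by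
    have : LipschitzOnWith 1 (Function.extend ((↑) : K → X) u₀ 0) K := by
      rw [lipschitzOnWith_iff_restrict]
      have e : K.domRestrict (Function.extend ((↑) : K → X) u₀ 0) = u₀ := by
        ext x
        exact Subtype.val_injective.extend_apply _ _ x
      rw [e]
      exact hu₀
    obtain ⟨g, hg, hgE⟩ := this.extend_real
    refine ⟨g, hg, fun x => ?_⟩
    rw [← hgE x.2]
    exact Subtype.val_injective.extend_apply _ _ x
  have huInt : ∀ m : Measure X, m Kᶜ = 0 → ∫ x, u x ∂m = ∫ x, u₀ x ∂(m.comap ((↑) : K → X)) := by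
    intro m hm
    conv_lhs => rw [← hmap m hm]
    rw [integral_map measurable_subtype_coe.aemeasurable hu.continuous.aestronglyMeasurable]
    simp only [hext]
  have hui : ∀ m : Measure X, IsProbabilityMeasure m → m Kᶜ = 0 → Integrable u m := by
    intro m _ hm
    rw [← Measure.restrict_eq_self_of_ae_mem (μ := m) (s := K) (by rwa [ae_iff])]
    exact hu.continuous.continuousOn.integrableOn_compact hK
  have key : ∀ γ : Measure (X × X), IsProbabilityMeasure γ →
        γ.map Prod.fst = μ → γ.map Prod.snd = ν →
        Integrable (fun p : X × X => dist p.1 p.2) γ ∧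
        Integrable (fun p : X × X => u p.1 - u p.2) γ ∧
        ∫ p, (u p.1 - u p.2) ∂γ = ∫ x, u x ∂μ - ∫ y, u y ∂ν := by
    intro γ hγ h1 h2
    have a1 : ∀ᵐ p ∂γ, p.1 ∈ K := by
      have : ∀ᵐ x ∂(γ.map Prod.fst), x ∈ K := by rw [h1, ae_iff]; exact hKμ
      exact ae_of_ae_map measurable_fst.aemeasurable this
    have a2 : ∀ᵐ p ∂γ, p.2 ∈ K := by
      have : ∀ᵐ x ∂(γ.map Prod.snd), x ∈ K := by rw [h2, ae_iff]; exact hKν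
      exact ae_of_ae_map measurable_snd.aemeasurable this
    have i1 : Integrable (fun p : X × X => u p.1) γ := by
      have := hui μ inferInstance hKμ
      rw [← h1] at this
      exact this.comp_measurable measurable_fst
    have i2 : Integrable (fun p : X × X => u p.2) γ := by
      have := hui ν inferInstance hKν
      rw [← h2] at this
      exact this.comp_measurable measurable_snd
    refine ⟨?_, i1.sub i2, ?_⟩
    · rw [← Measure.restrict_eq_self_of_ae_mem (μ := γ) (s := K ×ˢ K) (by
        filter_upwards [a1, a2] with p hp1 hp2 using ⟨hp1, hp2⟩)]
      exact (continuous_dist.continuousOn).integrableOn_compact (hK.prod hK)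
    · rw [integral_sub i1 i2]
      conv_rhs => rw [← h1, ← h2]
      rw [integral_map (by fun_prop) hu.continuous.aestronglyMeasurable,
        integral_map (by fun_prop) hu.continuous.aestronglyMeasurable]
  have hpt : ∀ p : X × X, u p.1 - u p.2 ≤ dist p.1 p.2 := fun p => by
    have := hu.dist_le_mul p.1 p.2
    rw [Real.dist_eq] at this
    simpa using (le_abs_self _).trans this
  have hlow : ∀ γ : Measure (X × X), IsProbabilityMeasure γ →
        γ.map Prod.fst = μ → γ.map Prod.snd = ν →
        ∫ x, u x ∂μ - ∫ y, u y ∂ν ≤ ∫ p, dist p.1 p.2 ∂γ := by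
    intro γ hγ h1 h2
    obtain ⟨k1, k2, k3⟩ := key γ hγ h1 h2
    rw [← k3]
    exact integral_mono k2 k1 hpt
  refine ⟨u, hu, ?_, ?_⟩
  · symm
    apply IsLeast.csInf_eq
    constructor
    · have hM : Measurable (Prod.map ((↑) : K → X) ((↑) : K → X)) :=
        measurable_subtype_coe.prodMap measurable_subtype_coe
      have q1 : (γ₀.map (Prod.map ((↑) : K → X) ((↑) : K → X))).map Prod.fst = μ := by
        rw [Measure.map_map measurable_fst hM, ← hmap μ hKμ, ← hm1,
          Measure.map_map measurable_subtype_coe measurable_fst]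
        rfl
      have q2 : (γ₀.map (Prod.map ((↑) : K → X) ((↑) : K → X))).map Prod.snd = ν := by
        rw [Measure.map_map measurable_snd hM, ← hmap ν hKν, ← hm2,
          Measure.map_map measurable_subtype_coe measurable_snd]
        rfl
      have q0 : IsProbabilityMeasure (γ₀.map (Prod.map ((↑) : K → X) ((↑) : K → X))) :=
        Measure.isProbabilityMeasure_map hM.aemeasurable
      refine ⟨_, q0, q1, q2, le_antisymm (hlow _ q0 q1 q2) ?_⟩
      rw [integral_map hM.aemeasurable continuous_dist.aestronglyMeasurable, huInt μ hKμ,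
        huInt ν hKν]
      exact hle
    · rintro r ⟨γ, hγ, h1, h2, rfl⟩
      exact hlow γ hγ h1 h2
  · intro γ hγ h1 h2
    obtain ⟨k1, k2, k3⟩ := key γ hγ h1 h2
    rw [← k3, eq_comm, integral_eq_iff_of_ae_le k2 k1 (Filter.Eventually.of_forall hpt)]
    rfl
end
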